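/- arXiv:2409.18559 — 2 statements merged into one kernel-verified Lean document; each statement's English description precedes it below -/
import Mathlib

section
/- Let N ≥ 1, let E = ℂ^N with the ℓ² inner product (EuclideanSpace ℂ (Fin N)), let λ : Fin N → ℝ be nonnegative and monotone nondecreasing, let (ψ_k)_{k ∈ Fin N} be an orthonormal basis of E, and let ψ ∈ E be a unit vector with coefficients c_k = ⟨ψ_k, ψ⟩. Fix K ∈ ℕ, Δτ > 0, δ ∈ [0,1), and an index m ∈ Fin N such that Σ_{j ≤ m} |c_j|² ≥ 1 − δ. Then ‖ Σ_k ( (cos(√(2Δτ λ_k)))^K − exp(−K Δτ λ_k) ) c_k ψ_k ‖² ≤ (4K²/9)·(Δτ)⁴ · Σ_{k ≤ m} λ_k⁴ |c_k|² + 4δ. -/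
open Finset

theorem aux_pt (y : ℝ) (hy : 0 ≤ y) :
    |Real.cos (Real.sqrt (2 * y)) - Real.exp (-y)| ≤ 2 / 3 * y ^ 2 := by
  have hx0 : 0 ≤ Real.sqrt (2 * y) := Real.sqrt_nonneg _
  have hx2 : Real.sqrt (2 * y) ^ 2 = 2 * y := Real.sq_sqrt (by positivity)
  set x := Real.sqrt (2 * y) with hx
  have h1 : 1 - x ^ 2 / 2 ≤ Real.cos x := Real.one_sub_sq_div_two_le_cos
  have h2 : 1 - y ≤ Real.exp (-y) := by linarith [Real.add_one_le_exp (-y)]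
  have h3 : Real.exp (-y) ≤ 1 - y + y ^ 2 / 2 := by
    have hq := Real.quadratic_le_exp_of_nonneg hy
    have hpos : 0 ≤ 1 - y + y ^ 2 / 2 := by nlinarith [sq_nonneg (y - 1)]
    have hm := mul_le_mul_of_nonneg_left hq hpos
    have he : Real.exp (-y) * Real.exp y = 1 := by rw [← Real.exp_add]; simp
    have : Real.exp (-y) * Real.exp y ≤ (1 - y + y ^ 2 / 2) * Real.exp y := by
      nlinarith [sq_nonneg (y ^ 2)]
    exact le_of_mul_le_mul_right this (Real.exp_pos y)
  have h4 : Real.cos x ≤ 1 - y + 2 / 3 * y ^ 2 := by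
    rcases le_or_gt (3 / 2) y with h | h
    · nlinarith [Real.cos_le_one x]
    · obtain ⟨t, ht⟩ : ∃ t, t = x / 2 := ⟨_, rfl⟩
      have hxt : x = 2 * t := by linarith
      have ht0 : 0 ≤ t := by linarith
      have hty : 2 * t ^ 2 = y := by rw [hxt] at hx2; linarith
      have ht1 : t ≤ 1 := by nlinarith
      have hs : t - t ^ 3 / 4 ≤ Real.sin t := by
        rcases ht0.eq_or_lt with h0 | h0
        · simp [← h0]
        · linarith [Real.sin_gt_sub_cube h0, pow_pos h0 3]
      have hc : Real.cos x = 1 - 2 * Real.sin t ^ 2 := by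
        rw [hxt, Real.cos_two_mul, Real.cos_sq']; ring
      have hn : 0 ≤ t - t ^ 3 / 4 := by
        have : t ^ 3 ≤ t := pow_le_of_le_one ht0 ht1 (by norm_num)
        linarith
      have hsq : (t - t ^ 3 / 4) ^ 2 ≤ Real.sin t ^ 2 := pow_le_pow_left₀ hn hs 2
      rw [hc, ← hty]
      nlinarith [sq_nonneg (t ^ 3), sq_nonneg (t ^ 2)]
  rw [abs_le]
  constructor <;> nlinarith [sq_nonneg y]

theorem aux_pow (a b : ℝ) (ha : |a| ≤ 1) (hb : |b| ≤ 1) (K : ℕ) :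
    |a ^ K - b ^ K| ≤ K * |a - b| := by
  induction K with
  | zero => simp
  | succ n ih =>
    have h : a ^ (n + 1) - b ^ (n + 1) = (a ^ n - b ^ n) * a + b ^ n * (a - b) := by ring
    have hbn : |b ^ n| ≤ 1 := by rw [abs_pow]; exact pow_le_one₀ (abs_nonneg b) hb
    calc |a ^ (n + 1) - b ^ (n + 1)| ≤ |a ^ n - b ^ n| * |a| + |b ^ n| * |a - b| := by
          rw [h, ← abs_mul, ← abs_mul]; exact abs_add_le _ _
      _ ≤ n * |a - b| * 1 + 1 * |a - b| := by gcongr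
      _ = ((n + 1 : ℕ) : ℝ) * |a - b| := by push_cast; ring

/-- Unnormalized error of `K` steps of the alternative approximate PITE versus the
exact imaginary-time evolution, in the eigenbasis of the Hamiltonian:
`‖Σ_k (cos(√(2Δτλ_k))^K − e^{−KΔτλ_k}) c_k ψ_k‖² ≤ (4K²/9)Δτ⁴ Σ_{k ≤ m} λ_k⁴|c_k|² + 4δ`. -/
theorem stmt_5 (N : ℕ) (hN : 1 ≤ N)
    (ψb : OrthonormalBasis (Fin N) ℂ (EuclideanSpace ℂ (Fin N)))
    (lam : Fin N → ℝ) (hlam : ∀ k, 0 ≤ lam k) (hmono : Monotone lam)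
    (ψ : EuclideanSpace ℂ (Fin N)) (hψ : ‖ψ‖ = 1)
    (c : Fin N → ℂ) (hc : ∀ k, c k = inner ℂ (ψb k) ψ)
    (K : ℕ) (Δτ : ℝ) (hΔτ : 0 < Δτ) (δ : ℝ) (hδ : δ ∈ Set.Ico (0:ℝ) 1)
    (m : Fin N) (hm : 1 - δ ≤ ∑ j ∈ Finset.Iic m, ‖c j‖ ^ 2) :
    ‖∑ k, ((((Real.cos (Real.sqrt (2 * Δτ * lam k))) ^ K
          - Real.exp (-(K * Δτ * lam k)) : ℝ) : ℂ) * c k) • ψb k‖ ^ 2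
      ≤ (4 * (K : ℝ) ^ 2 / 9) * Δτ ^ 4 * ∑ k ∈ Finset.Iic m, lam k ^ 4 * ‖c k‖ ^ 2
        + 4 * δ := by
  have hnorm : ∀ f : Fin N → ℂ, ‖∑ k, f k • ψb k‖ ^ 2 = ∑ k, ‖f k‖ ^ 2 := by
    intro f
    rw [← ψb.sum_sq_norm_inner_right]
    refine Finset.sum_congr rfl fun k _ => ?_
    rw [ψb.orthonormal.inner_right_fintype]
  have htot : ∑ k, ‖c k‖ ^ 2 = 1 := by
    simp_rw [hc]
    rw [ψb.sum_sq_norm_inner_right, hψ, one_pow]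
  have hsplit : ∀ g : Fin N → ℝ,
      ∑ k, g k = ∑ k ∈ Finset.Iic m, g k + ∑ k ∈ (Finset.Iic m)ᶜ, g k :=
    fun g => (Finset.sum_add_sum_compl _ g).symm
  have hexp : ∀ k, Real.exp (-(K * Δτ * lam k)) = Real.exp (-(Δτ * lam k)) ^ K := by
    intro k
    rw [← Real.exp_nat_mul]; congr 1; ring
  have hy : ∀ k, 0 ≤ Δτ * lam k := fun k => mul_nonneg hΔτ.le (hlam k)
  have hb : ∀ k, |Real.exp (-(Δτ * lam k))| ≤ 1 := by
    intro k
    rw [abs_of_pos (Real.exp_pos _), Real.exp_le_one_iff]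
    linarith [hy k]
  rw [hnorm, hsplit]
  simp only [norm_mul, Complex.norm_real, Real.norm_eq_abs, mul_pow]
  rw [hsplit] at htot
  refine add_le_add ?_ ?_
  · rw [Finset.mul_sum]
    refine Finset.sum_le_sum fun k _ => ?_
    have h1 := aux_pow _ _ (Real.abs_cos_le_one (Real.sqrt (2 * Δτ * lam k))) (hb k) K
    have h2 := aux_pt _ (hy k)
    rw [← mul_assoc] at h2
    rw [hexp]
    have h3 := h1.trans (mul_le_mul_of_nonneg_left h2 (Nat.cast_nonneg K))
    have h4 := mul_le_mul_of_nonneg_right (pow_le_pow_left₀ (abs_nonneg _) h3 2)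
      (sq_nonneg ‖c k‖)
    refine h4.trans (le_of_eq ?_)
    ring
  · calc _ ≤ ∑ k ∈ (Finset.Iic m)ᶜ, 4 * ‖c k‖ ^ 2 := by
          refine Finset.sum_le_sum fun k _ => ?_
          refine mul_le_mul_of_nonneg_right ?_ (sq_nonneg _)
          have h1 : |Real.cos (Real.sqrt (2 * Δτ * lam k)) ^ K| ≤ 1 := by
            rw [abs_pow]; exact pow_le_one₀ (abs_nonneg _) (Real.abs_cos_le_one _)
          have h2 : |Real.exp (-(Δτ * lam k)) ^ K| ≤ 1 := by
            rw [abs_pow]; exact pow_le_one₀ (abs_nonneg _) (hb k)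
          rw [hexp]
          have h3 := (abs_sub _ _).trans (add_le_add h1 h2)
          have h4 := pow_le_pow_left₀ (abs_nonneg _) h3 2
          linarith
      _ ≤ 4 * δ := by
          rw [← Finset.mul_sum]; linarith
end

section
/- Let X be a complex Banach space and let A, B : X →L X be bounded linear operators such that for all t ≥ 0, ‖exp(−tA)‖ ≤ 1, ‖exp(−tB)‖ ≤ 1, and ‖exp(−t(A+B))‖ ≤ 1 (operator norms). Then for every x ∈ X and every t > 0, ‖ ( exp(−tA)·exp(−tB) − exp(−t(A+B)) ) x ‖ ≤ ( ‖B‖²·‖x‖ + (1/2)·sup_{0 ≤ s ≤ t} ‖ (A∘B − B∘A)( exp(−s(A+B)) x ) ‖ )·t². -/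
open NormedSpace Set

lemma aux_taylor {X : Type*} [NormedAddCommGroup X] [NormedSpace ℝ X]
    (f f' f'' : ℝ → X) (K t : ℝ) (ht : 0 ≤ t)
    (h1 : ∀ s, HasDerivAt f (f' s) s) (h2 : ∀ s, HasDerivAt f' (f'' s) s)
    (hK : ∀ s ∈ Icc 0 t, ‖f'' s‖ ≤ K) :
    ‖f t - f 0 - t • f' 0‖ ≤ K * t ^ 2 / 2 := by
  have hg : ∀ s ∈ Icc 0 t, ‖f' s - f' 0‖ ≤ K * (s - 0) := by
    apply norm_image_sub_le_of_norm_deriv_le_segment' (f' := f'')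
    · intro s _; exact (h2 s).hasDerivWithinAt
    · intro s hs; exact hK s ⟨hs.1, hs.2.le⟩
  have hd : ∀ s, HasDerivAt (fun s => f s - f 0 - s • f' 0) (f' s - f' 0) s := by
    intro s
    have := ((h1 s).sub_const (f 0)).sub ((hasDerivAt_id s).smul_const (f' 0))
    rw [one_smul] at this
    exact this
  have hb : ∀ s, HasDerivAt (fun s : ℝ => K * s ^ 2 / 2) (K * s) s := by
    intro s
    have := (((hasDerivAt_id s).pow 2).const_mul K).div_const 2
    refine this.congr_deriv ?_
    simp only [id, Nat.cast_ofNat]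
    ring
  refine image_norm_le_of_norm_deriv_right_le_deriv_boundary
    (f := fun s => f s - f 0 - s • f' 0) (f' := fun s => f' s - f' 0) (a := 0) (b := t)
    (B := fun s : ℝ => K * s ^ 2 / 2) (B' := fun s => K * s)
    (fun s _ => (hd s).continuousAt.continuousWithinAt)
    (fun s _ => (hd s).hasDerivWithinAt) (by simp) hb ?_ ⟨ht, le_rfl⟩
  intro s hs
  simpa using hg s ⟨hs.1, hs.2.le⟩

lemma aux_exp {X : Type*} [NormedAddCommGroup X] [NormedSpace ℂ X] [CompleteSpace X]
    (M : X →L[ℂ] X) (s : ℝ) :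
    HasDerivAt (fun s : ℝ => NormedSpace.exp ((-(s : ℂ)) • M))
      (-(NormedSpace.exp ((-(s : ℂ)) • M) * M)) s := by
  have h := hasDerivAt_exp_smul_const (𝕂 := ℂ) M (-(s : ℂ))
  have h2 : HasDerivAt (fun s : ℝ => -(s : ℂ)) (-1) s := (Complex.ofRealCLM.hasDerivAt (x := s)).neg
  have := h.scomp s h2
  simpa [Function.comp_def] using this

lemma aux_comm {X : Type*} [NormedAddCommGroup X] [NormedSpace ℂ X] [CompleteSpace X]
    (M : X →L[ℂ] X) (s : ℂ) (x : X) :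
    M (NormedSpace.exp (s • M) x) = NormedSpace.exp (s • M) (M x) := by
  have : Commute M (NormedSpace.exp (s • M)) := ((Commute.refl M).smul_right s).exp_right
  exact congrArg (fun T : X →L[ℂ] X => T x) this.eq

/-- derivative of `e^{-(t-s)A} D e^{-s(A+B)} x`. -/
lemma aux_deriv {X : Type*} [NormedAddCommGroup X] [NormedSpace ℂ X] [CompleteSpace X]
    (A C D : X →L[ℂ] X) (x : X) (t s : ℝ) :
    HasDerivAt (fun s : ℝ => NormedSpace.exp ((-((t - s : ℝ) : ℂ)) • A)
        (D (NormedSpace.exp ((-(s : ℂ)) • C) x)))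
      (NormedSpace.exp ((-((t - s : ℝ) : ℂ)) • A)
        ((A * D - D * C) (NormedSpace.exp ((-(s : ℂ)) • C) x))) s := by
  have h1 : HasDerivAt (fun s : ℝ => NormedSpace.exp ((-((t - s : ℝ) : ℂ)) • A))
      (NormedSpace.exp ((-((t - s : ℝ) : ℂ)) • A) * A) s := by
    have h := (aux_exp A (t - s)).scomp s ((hasDerivAt_id s).const_sub t)
    refine h.congr_deriv ?_
    simp
  have h2 := (h1.mul ((aux_exp C s).const_mul D))
  let L : (X →L[ℂ] X) →L[ℝ] X := (ContinuousLinearMap.apply ℂ X x).restrictScalars ℝ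
  have h3 := L.hasFDerivAt.comp_hasDerivAt s h2
  refine h3.congr_deriv ?_
  have e := aux_comm C (-(s : ℂ)) x
  simp only [L, ContinuousLinearMap.coe_restrictScalars', ContinuousLinearMap.apply_apply,
    add_apply, neg_apply, mul_neg, sub_eq_add_neg]
  rw [map_add, map_neg]
  refine congrArg₂ (· + ·) rfl (congrArg Neg.neg ?_)
  exact congrArg (fun y => NormedSpace.exp ((-((t + -s : ℝ) : ℂ)) • A) (D y)) e.symm

theorem stmt_8 {X : Type*} [NormedAddCommGroup X] [NormedSpace ℂ X] [CompleteSpace X]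
    (A B : X →L[ℂ] X)
    (hA : ∀ t : ℝ, 0 ≤ t → ‖NormedSpace.exp ((-(t : ℂ)) • A)‖ ≤ 1)
    (hB : ∀ t : ℝ, 0 ≤ t → ‖NormedSpace.exp ((-(t : ℂ)) • B)‖ ≤ 1)
    (hAB : ∀ t : ℝ, 0 ≤ t → ‖NormedSpace.exp ((-(t : ℂ)) • (A + B))‖ ≤ 1)
    (x : X) (t : ℝ) (ht : 0 < t) :
    ‖(NormedSpace.exp ((-(t : ℂ)) • A) * NormedSpace.exp ((-(t : ℂ)) • B)
        - NormedSpace.exp ((-(t : ℂ)) • (A + B))) x‖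
      ≤ (‖B‖ ^ 2 * ‖x‖
          + (1 / 2) * ⨆ s : Icc (0 : ℝ) t,
              ‖(A ∘L B - B ∘L A) ((NormedSpace.exp ((-((s : ℝ) : ℂ)) • (A + B))) x)‖) * t ^ 2 := by
  set S := ⨆ s : Icc (0 : ℝ) t,
      ‖(A ∘L B - B ∘L A) ((NormedSpace.exp ((-((s : ℝ) : ℂ)) • (A + B))) x)‖ with hS
  have le1 : ∀ (T : X →L[ℂ] X) (y : X), ‖T‖ ≤ 1 → ‖T y‖ ≤ ‖y‖ := fun T y h =>
    (T.le_of_opNorm_le h y).trans (by simp)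
  have hBB : ∀ y, ‖B (B y)‖ ≤ ‖B‖ ^ 2 * ‖y‖ := by
    intro y
    calc ‖B (B y)‖ ≤ ‖B‖ * (‖B‖ * ‖y‖) := B.le_opNorm_of_le (B.le_opNorm y)
      _ = _ := by ring
  have hSle : ∀ s ∈ Icc (0 : ℝ) t,
      ‖(A ∘L B - B ∘L A) ((NormedSpace.exp ((-((s : ℝ) : ℂ)) • (A + B))) x)‖ ≤ S := by
    intro s hs
    refine le_ciSup (f := fun s : Icc (0 : ℝ) t =>
      ‖(A ∘L B - B ∘L A) ((NormedSpace.exp ((-((s : ℝ) : ℂ)) • (A + B))) x)‖) ?_ ⟨s, hs⟩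
    refine ⟨‖A ∘L B - B ∘L A‖ * ‖x‖, ?_⟩
    rintro _ ⟨r, rfl⟩
    exact (A ∘L B - B ∘L A).le_opNorm_of_le (le1 _ _ (hAB r r.2.1))
  -- first Taylor expansion
  have T1 := aux_taylor
    (fun s : ℝ => NormedSpace.exp ((-((t - s : ℝ) : ℂ)) • A)
        ((1 : X →L[ℂ] X) (NormedSpace.exp ((-(s : ℂ)) • (A + B)) x)))
    (fun s : ℝ => NormedSpace.exp ((-((t - s : ℝ) : ℂ)) • A)
        ((A * 1 - 1 * (A + B)) (NormedSpace.exp ((-(s : ℂ)) • (A + B)) x)))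
    _ (S + ‖B‖ ^ 2 * ‖x‖) t ht.le (fun s => aux_deriv A (A + B) 1 x t s)
    (fun s => aux_deriv A (A + B) _ x t s) (by
      intro s hs
      refine (le1 _ _ (hA _ (by linarith [hs.2]))).trans ?_
      have e : A * (A * 1 - 1 * (A + B)) - (A * 1 - 1 * (A + B)) * (A + B)
          = -(A ∘L B - B ∘L A) + B * B := by
        change _ = -(A * B - B * A) + B * B
        noncomm_ring
      rw [e, add_apply, neg_apply]
      refine (norm_add_le _ _).trans (add_le_add ?_ ?_)
      · rw [norm_neg]; exact hSle s hs
      · exact (hBB _).trans (by gcongr; exact le1 _ _ (hAB s hs.1)))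
  have T2 := aux_taylor
    (fun s : ℝ => NormedSpace.exp ((-((t - s : ℝ) : ℂ)) • (0 : X →L[ℂ] X))
        ((1 : X →L[ℂ] X) (NormedSpace.exp ((-(s : ℂ)) • B) x)))
    (fun s : ℝ => NormedSpace.exp ((-((t - s : ℝ) : ℂ)) • (0 : X →L[ℂ] X))
        ((0 * 1 - 1 * B) (NormedSpace.exp ((-(s : ℂ)) • B) x)))
    _ (‖B‖ ^ 2 * ‖x‖) t ht.le (fun s => aux_deriv 0 B 1 x t s)
    (fun s => aux_deriv 0 B _ x t s) (by
      intro s hs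
      simp only [smul_zero, NormedSpace.exp_zero]
      have := (hBB _).trans (mul_le_mul_of_nonneg_left (le1 _ x (hB s hs.1)) (sq_nonneg ‖B‖))
      simpa using this)
  simp at T1 T2
  have hE1 := hA t ht.le
  have T3 := (le1 _ _ hE1).trans T2
  have key : (NormedSpace.exp ((-(t : ℂ)) • A) * NormedSpace.exp ((-(t : ℂ)) • B)
        - NormedSpace.exp ((-(t : ℂ)) • (A + B))) x
      = NormedSpace.exp ((-(t : ℂ)) • A) ((exp (-(t • B))) x - x + t • B x)
        - ((exp (-(t • A) + -(t • B))) x - (exp (-(t • A))) x + t • (exp (-(t • A))) (B x)) := by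
    simp
  rw [key]
  refine (norm_sub_le _ _).trans ((add_le_add T3 T1).trans (le_of_eq ?_))
  ring
end
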